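/- Let n, q be natural numbers. There exists a natural number m₀ = m₀(n,q) (one may take m₀ = (n+1)·((6q−2)^T + 2q−1) where T = n² + (n−1)²) such that for all natural numbers p and m with p ≤ 2q−1 and m ≥ m₀, Breaker has a winning strategy for the (p,q)-crossing game on Λ_{m×n}. -/

import Mathlib

namespace CrossingGames

/-- A vertex of the square integer lattice `ℤ²`. -/
abbrev Vtx : Type := ℤ × ℤ

/-- An edge of the square integer lattice `ℤ²`, encoded as a base vertex together with a
direction: `(v, true)` is the horizontal edge joining `v = (x,y)` to `(x+1,y)`, while
`(v, false)` is the vertical edge joining `v = (x,y)` to `(x,y+1)`. -/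
abbrev Edge : Type := Vtx × Bool

/-- The two endpoints of an edge. -/
def ends (e : Edge) : Vtx × Vtx :=
  (e.1, if e.2 then (e.1.1 + 1, e.1.2) else (e.1.1, e.1.2 + 1))

/-- The edge `e` joins the vertices `u` and `v`. -/
def joins (e : Edge) (u v : Vtx) : Prop :=
  ((ends e).1 = u ∧ (ends e).2 = v) ∨ ((ends e).1 = v ∧ (ends e).2 = u)

/-- The vertex set of the grid `Λ_{m×n}`: all `(x,y) ∈ ℤ²` with `1 ≤ x ≤ m`, `1 ≤ y ≤ n`. -/
def lamVtx (m n : ℕ) : Set Vtx :=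
  {v | 1 ≤ v.1 ∧ v.1 ≤ (m : ℤ) ∧ 1 ≤ v.2 ∧ v.2 ≤ (n : ℤ)}

/-- The edge set of the grid `Λ_{m×n}`: lattice edges with both endpoints in `Λ_{m×n}`. -/
def lamEdges (m n : ℕ) : Set Edge :=
  {e | (ends e).1 ∈ lamVtx m n ∧ (ends e).2 ∈ lamVtx m n}

/-- The edge set of the board `S_{m×n}`: the grid `Λ_{m×n}` with all of its leftmost and
rightmost vertical edges deleted. -/
def sEdges (m n : ℕ) : Set Edge :=
  {e ∈ lamEdges m n | ¬ (e.2 = false ∧ (e.1.1 = 1 ∨ e.1.1 = (m : ℤ)))}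

/-- The list of consecutive pairs of a list. -/
def cp {α : Type*} (l : List α) : List (α × α) := l.zip l.tail

/-- `S` contains all the edges of a left-right crossing path of a board with `m` columns
and `n` rows: a path of edges of `S` joining a vertex `(1,y)` on the left-hand side of the
board to a vertex `(m,y')` on its right-hand side. -/
def HasCrossing (m n : ℕ) (S : Set Edge) : Prop :=
  ∃ l : List Vtx,
    (∃ v, l.head? = some v ∧ v.1 = 1) ∧
    (∃ v, l.getLast? = some v ∧ v.1 = (m : ℤ)) ∧
    (∀ v ∈ l, v ∈ lamVtx m n) ∧
    ∀ p ∈ cp l, ∃ e ∈ S, joins e p.1 p.2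

/-- A strategy: given the list of all moves played so far (oldest first), produce the
next move (a finite set of edges to claim). -/
abbrev Strategy : Type := List (Finset Edge) → Finset Edge

/-- The union of the moves sitting in positions of the given parity of a history
(`true`: positions 0, 2, 4, …; `false`: positions 1, 3, 5, …). -/
def altUnion : Bool → List (Finset Edge) → Finset Edge
  | _, [] => ∅
  | true, mv :: h => mv ∪ altUnion false h
  | false, _ :: h => altUnion true h

/-- All edges claimed by the player moving first (i.e. on even positions) in a history. -/
def firstClaimed (h : List (Finset Edge)) : Finset Edge := altUnion true h

/-- All edges claimed by the player moving second (i.e. on odd positions) in a history. -/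
def secondClaimed (h : List (Finset Edge)) : Finset Edge := altUnion false h

/-- All edges claimed so far in a history. -/
def allClaimed (h : List (Finset Edge)) : Finset Edge := h.foldr (· ∪ ·) ∅

/-- The history of moves (oldest first) after `t` full rounds, when the player moving
first uses strategy `σ` and the player moving second uses strategy `τ`. -/
def hist (σ τ : Strategy) : ℕ → List (Finset Edge)
  | 0 => []
  | t + 1 =>
    let h := hist σ τ t
    h ++ [σ h, τ (h ++ [σ h])]

/-- The move `mv` is legal on `board` after the history `h` for a player of bias `k`: it
consists of as-yet-unclaimed edges of the board, and there are exactly `k` of them, unless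
fewer than `k` unclaimed edges remain, in which case the player claims all of them. -/
def LegalMove (board : Set Edge) (h : List (Finset Edge)) (k : ℕ) (mv : Finset Edge) : Prop :=
  (↑mv : Set Edge) ⊆ board \ ↑(allClaimed h) ∧
    (mv.card = k ∨ (mv.card < k ∧ board \ ↑(allClaimed h) ⊆ (↑mv : Set Edge)))

/-- The player moving first (with bias `p`) always moves legally when playing `σ`
against `τ`. -/
def FirstLegal (board : Set Edge) (p : ℕ) (σ τ : Strategy) : Prop :=
  ∀ t, LegalMove board (hist σ τ t) p (σ (hist σ τ t))

/-- The player moving second (with bias `q`) always moves legally when playing `τ`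
against `σ`. -/
def SecondLegal (board : Set Edge) (q : ℕ) (σ τ : Strategy) : Prop :=
  ∀ t, LegalMove board (hist σ τ t ++ [σ (hist σ τ t)]) q (τ (hist σ τ t ++ [σ (hist σ τ t)]))

/-- Maker (playing first and claiming `p` edges per turn) has a winning strategy for the
Maker–Breaker game on `board` in which Breaker claims `q` edges per turn: she can
guarantee that at some point her claimed edges satisfy the winning condition `win`. -/
def MakerWins (board : Set Edge) (win : Set Edge → Prop) (p q : ℕ) : Prop :=
  ∃ σ : Strategy, ∀ τ : Strategy, SecondLegal board q σ τ →
    FirstLegal board p σ τ ∧ ∃ t, win ↑(firstClaimed (hist σ τ t))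

/-- Breaker (playing second and claiming `q` edges per turn) has a winning strategy for
the Maker–Breaker game on `board` in which Maker claims `p` edges per turn: he can
forever prevent Maker's claimed edges from satisfying the winning condition `win`. -/
def BreakerWins (board : Set Edge) (win : Set Edge → Prop) (p q : ℕ) : Prop :=
  ∃ τ : Strategy, ∀ σ : Strategy, FirstLegal board p σ τ →
    SecondLegal board q σ τ ∧ ∀ t, ¬ win ↑(firstClaimed (hist σ τ t))

/-! ### History bookkeeping -/

lemma altUnion_append_two (h : List (Finset Edge)) (a b : Finset Edge) (hl : Even h.length) :
    altUnion true (h ++ [a, b]) = altUnion true h ∪ a ∧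
    altUnion false (h ++ [a, b]) = altUnion false h ∪ b := by
  induction h using List.twoStepInduction with
  | nil => simp [altUnion]
  | singleton x => simp at hl
  | cons_cons x y t ih _ =>
    have : Even t.length := by
      simp only [List.length_cons] at hl
      grind
    obtain ⟨h1, h2⟩ := ih this
    simp only [List.cons_append, altUnion, h1, h2, Finset.union_assoc]
    exact ⟨trivial, trivial⟩

lemma altUnion_append_one (h : List (Finset Edge)) (a : Finset Edge) (hl : Even h.length) :
    altUnion true (h ++ [a]) = altUnion true h ∪ a ∧
    altUnion false (h ++ [a]) = altUnion false h := by
  induction h using List.twoStepInduction with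
  | nil => simp [altUnion]
  | singleton x => simp at hl
  | cons_cons x y t ih _ =>
    have : Even t.length := by
      simp only [List.length_cons] at hl
      grind
    obtain ⟨h1, h2⟩ := ih this
    simp only [List.cons_append, altUnion, h1, h2, Finset.union_assoc]
    exact ⟨trivial, trivial⟩

lemma allClaimed_eq (h : List (Finset Edge)) :
    allClaimed h = altUnion true h ∪ altUnion false h := by
  induction h with
  | nil => simp [allClaimed, altUnion]
  | cons x t ih =>
    have : allClaimed (x :: t) = x ∪ allClaimed t := rfl
    rw [this, ih]
    simp only [altUnion]
    ext e; simp only [Finset.mem_union]; tauto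

lemma hist_even (σ τ : Strategy) (t : ℕ) : Even (hist σ τ t).length := by
  induction t with
  | zero => simp [hist]
  | succ t ih => simp only [hist, List.length_append, List.length_cons, List.length_nil]; grind

lemma breakerWins_of_inv (board : Set Edge) (hfin : board.Finite) (win : Set Edge → Prop)
    (hwinmono : ∀ S S' : Set Edge, S ⊆ S' → win S → win S') (p q : ℕ)
    (Inv : Finset Edge → Finset Edge → Prop)
    (h0 : ∀ mv : Finset Edge, mv.card ≤ p → Inv mv ∅)
    (hwin : ∀ M B, Inv M B → ¬ win ↑M)
    (hstep : ∀ M B, Inv M B → ∃ mv : Finset Edge, (↑mv : Set Edge) ⊆ board \ ↑(M ∪ B) ∧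
      mv.card ≤ q ∧ ∀ mv₂ : Finset Edge, mv ⊆ mv₂ → (↑mv₂ : Set Edge) ⊆ board \ ↑(M ∪ B) →
      ∀ mv' : Finset Edge, (↑mv' : Set Edge) ⊆ board \ ↑(M ∪ (B ∪ mv₂)) → mv'.card ≤ p →
        Inv (M ∪ mv') (B ∪ mv₂)) :
    BreakerWins board win p q := by
  classical
  have hstep2 : ∀ M B, ∃ mv : Finset Edge, Inv M B →
      ((↑mv : Set Edge) ⊆ board \ ↑(M ∪ B) ∧
      (mv.card = q ∨ (mv.card < q ∧ board \ ↑(M ∪ B) ⊆ (↑mv : Set Edge))) ∧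
      ∀ mv' : Finset Edge, (↑mv' : Set Edge) ⊆ board \ ↑(M ∪ (B ∪ mv)) → mv'.card ≤ p →
        Inv (M ∪ mv') (B ∪ mv)) := by
    intro M B
    by_cases hI : Inv M B
    swap
    · exact ⟨∅, fun h => absurd h hI⟩
    obtain ⟨mv, h1, h2, h3⟩ := hstep M B hI
    have hf : (board \ ↑(M ∪ B)).Finite := hfin.subset Set.diff_subset
    obtain ⟨F, hF⟩ := hf.exists_finset_coe
    rw [← hF] at h1 h3 ⊢
    by_cases hc : F.card ≤ q
    · refine ⟨F, fun _ => ⟨subset_rfl, ?_, h3 F (by exact_mod_cast h1) subset_rfl⟩⟩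
      rcases hc.eq_or_lt with h | h
      · exact Or.inl h
      · exact Or.inr ⟨h, subset_rfl⟩
    · obtain ⟨G, hG1, hG2, hG3⟩ := Finset.exists_subsuperset_card_eq
        (by exact_mod_cast h1 : mv ⊆ F) h2 (by omega : q ≤ F.card)
      exact ⟨G, fun _ => ⟨by exact_mod_cast hG2, Or.inl hG3, h3 G hG1 (by exact_mod_cast hG2)⟩⟩
  choose br hbr using hstep2
  refine ⟨fun h => br (firstClaimed h) (secondClaimed h), fun σ hσ => ?_⟩
  set τ : Strategy := fun h => br (firstClaimed h) (secondClaimed h) with hτ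
  have key : ∀ t, Inv (firstClaimed (hist σ τ t ++ [σ (hist σ τ t)]))
      (secondClaimed (hist σ τ t ++ [σ (hist σ τ t)])) := by
    intro t
    induction t with
    | zero =>
      have := hσ 0
      simp only [hist, List.nil_append, firstClaimed, secondClaimed, altUnion, Finset.union_empty]
        at this ⊢
      apply h0
      rcases this.2 with h | h <;> omega
    | succ t ih =>
      have hl := hσ (t+1)
      obtain ⟨a1, a2⟩ := altUnion_append_one (hist σ τ t) (σ (hist σ τ t)) (hist_even σ τ t)
      obtain ⟨b1, b2⟩ := altUnion_append_two (hist σ τ t) (σ (hist σ τ t))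
        (τ (hist σ τ t ++ [σ (hist σ τ t)])) (hist_even σ τ t)
      obtain ⟨c1, c2⟩ := altUnion_append_one (hist σ τ (t+1)) (σ (hist σ τ (t+1)))
        (hist_even σ τ (t+1))
      have hh : hist σ τ (t+1) = hist σ τ t ++ [σ (hist σ τ t), τ (hist σ τ t ++ [σ (hist σ τ t)])] :=
        rfl
      have hb := (hbr _ _ ih).2.2
      have e1 : firstClaimed (hist σ τ (t+1)) = firstClaimed (hist σ τ t ++ [σ (hist σ τ t)]) := by
        rw [hh]; unfold firstClaimed; rw [b1, a1]
      have e2 : secondClaimed (hist σ τ (t+1)) = secondClaimed (hist σ τ t ++ [σ (hist σ τ t)]) ∪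
          τ (hist σ τ t ++ [σ (hist σ τ t)]) := by
        rw [hh]; unfold secondClaimed; rw [b2, a2]
      have e3 : firstClaimed (hist σ τ (t+1) ++ [σ (hist σ τ (t+1))]) =
        firstClaimed (hist σ τ (t+1)) ∪ σ (hist σ τ (t+1)) := c1
      have e4 : secondClaimed (hist σ τ (t+1) ++ [σ (hist σ τ (t+1))]) =
        secondClaimed (hist σ τ (t+1)) := c2
      have e5 : allClaimed (hist σ τ (t+1)) =
        firstClaimed (hist σ τ (t+1)) ∪ secondClaimed (hist σ τ (t+1)) := allClaimed_eq _
      rw [e3, e4, e2, e1]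
      apply hb
      · have := hl.1
        rw [e5, e2, e1] at this
        exact this
      · rcases hl.2 with h | h <;> omega
  refine ⟨fun t => ?_, fun t hw => ?_⟩
  · have := hbr _ _ (key t)
    refine ⟨?_, ?_⟩
    · rw [allClaimed_eq]; exact this.1
    · rw [allClaimed_eq]; exact this.2.1
  · refine hwin _ _ (key t) (hwinmono _ _ ?_ hw)
    obtain ⟨a1, a2⟩ := altUnion_append_one (hist σ τ t) (σ (hist σ τ t)) (hist_even σ τ t)
    unfold firstClaimed
    rw [a1]
    exact_mod_cast Finset.subset_union_left

/-! ### The copies and the orientation (Gross pairing) -/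

/-- Edges of the copy of the self-dual board with column offset `o`. -/
noncomputable def cpy (n : ℕ) (o : ℤ) : Finset Edge :=
  ((Finset.Icc (o+1) (o+n) ×ˢ Finset.Icc (1:ℤ) n).image fun v => (v, true)) ∪
  ((Finset.Icc (o+2) (o+n) ×ˢ Finset.Icc (1:ℤ) (n-1)).image fun v => (v, false))

lemma mem_cpy (n : ℕ) (o x y : ℤ) (b : Bool) : ((x, y), b) ∈ cpy n o ↔
    (b = true ∧ o + 1 ≤ x ∧ x ≤ o + n ∧ 1 ≤ y ∧ y ≤ n) ∨
    (b = false ∧ o + 2 ≤ x ∧ x ≤ o + n ∧ 1 ≤ y ∧ y ≤ n - 1) := by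
  simp only [cpy, Finset.mem_union, Finset.mem_image, Finset.mem_product, Finset.mem_Icc,
    Prod.exists, Prod.mk.injEq]
  constructor
  · rintro (⟨a, c, h, ⟨rfl, rfl⟩, rfl⟩ | ⟨a, c, h, ⟨rfl, rfl⟩, rfl⟩)
    · left; exact ⟨rfl, by tauto⟩
    · right; exact ⟨rfl, by tauto⟩
  · rintro (⟨rfl, h⟩ | ⟨rfl, h⟩)
    · left; exact ⟨x, y, by tauto, ⟨rfl, rfl⟩, rfl⟩
    · right; exact ⟨x, y, by tauto, ⟨rfl, rfl⟩, rfl⟩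

lemma card_cpy (n : ℕ) (hn : 1 ≤ n) (o : ℤ) : (cpy n o).card ≤ n ^ 2 + (n - 1) ^ 2 := by
  refine (Finset.card_union_le _ _).trans (add_le_add ?_ ?_)
  · refine Finset.card_image_le.trans ?_
    rw [Finset.card_product, Int.card_Icc, Int.card_Icc, sq]
    apply Nat.mul_le_mul <;> omega
  · refine Finset.card_image_le.trans ?_
    rw [Finset.card_product, Int.card_Icc, Int.card_Icc, sq]
    apply Nat.mul_le_mul <;> omega

/-- Head of an edge in the orientation attached to offset `o`. -/
def hd (o : ℤ) (e : Edge) : Vtx :=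
  if e.2 then (if e.1.2 ≤ e.1.1 - o then e.1 else (e.1.1 + 1, e.1.2))
  else (if e.1.2 < e.1.1 - o then e.1 else (e.1.1, e.1.2 + 1))

/-- Tail of an edge. -/
def tl (o : ℤ) (e : Edge) : Vtx :=
  if e.2 then (if e.1.2 ≤ e.1.1 - o then (e.1.1 + 1, e.1.2) else e.1)
  else (if e.1.2 < e.1.1 - o then (e.1.1, e.1.2 + 1) else e.1)

/-- The first edge claimed by Breaker in a copy. -/
def e0 (o : ℤ) : Edge := ((o + 1, 1), true)

lemma e0_mem (n : ℕ) (hn : 1 ≤ n) (o : ℤ) : e0 o ∈ cpy n o := by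
  rw [e0, mem_cpy]; left; refine ⟨rfl, ?_⟩; omega

lemma hd_three (o : ℤ) (a b c : Edge) (h1 : hd o a = hd o b) (h2 : hd o a = hd o c) :
    a = b ∨ a = c ∨ b = c := by
  obtain ⟨⟨x, y⟩, i⟩ := a
  obtain ⟨⟨x', y'⟩, i'⟩ := b
  obtain ⟨⟨x'', y''⟩, i''⟩ := c
  cases i <;> cases i' <;> cases i'' <;>
  simp only [hd, Prod.mk.injEq] at * <;> grind

lemma joins_tl_hd (o : ℤ) (e : Edge) (u v : Vtx) (h : joins e u v) :
    (u = tl o e ∧ v = hd o e) ∨ (u = hd o e ∧ v = tl o e) := by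
  obtain ⟨⟨x, y⟩, i⟩ := e
  cases i <;> simp only [joins, ends, tl, hd] at * <;> grind

lemma hd_cpy (n : ℕ) (o : ℤ) (e : Edge) (he : e ∈ cpy n o) (hne : e ≠ e0 o) :
    o + 2 ≤ (hd o e).1 ∧ (hd o e).1 ≤ o + n := by
  obtain ⟨⟨x, y⟩, i⟩ := e
  rw [mem_cpy] at he
  cases i <;> simp only [hd, e0, ne_eq, Prod.mk.injEq] at * <;> grind

lemma mem_cpy_of_joins (n m : ℕ) (o : ℤ) (e : Edge) (u v : Vtx) (h : joins e u v)
    (hu : u ∈ lamVtx m n) (hv : v ∈ lamVtx m n) (hu1 : o + 2 ≤ u.1) (hv1 : v.1 ≤ o + n) :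
    e ∈ cpy n o := by
  obtain ⟨⟨x, y⟩, i⟩ := e
  obtain ⟨a, b⟩ := u
  obtain ⟨c, d⟩ := v
  rw [mem_cpy]
  simp only [lamVtx, Set.mem_setOf_eq] at hu hv hu1 hv1
  cases i <;> simp [joins, ends] at * <;> omega

/-- Vertices that can be reached from the right along oriented edges. -/
inductive Desc (n : ℕ) (o : ℤ) (M : Set Edge) : Vtx → Prop
  | base (v : Vtx) (h : o + n + 1 ≤ v.1) : Desc n o M v
  | step (e : Edge) (he : e ∈ cpy n o) (hM : e ∈ M) (h : Desc n o M (tl o e)) :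
      Desc n o M (hd o e)

lemma no_crossing (n m : ℕ) (hn : 1 ≤ n) (o : ℤ) (ho : 0 ≤ o) (hm : o + n + 1 ≤ m) (M : Set Edge)
    (h0 : e0 o ∉ M)
    (hp : ∀ a ∈ cpy n o, ∀ b ∈ cpy n o, a ∈ M → b ∈ M → hd o a = hd o b → a = b) :
    ¬ HasCrossing m n M := by
  have hD : ∀ v, Desc n o M v → o + 2 ≤ v.1 := by
    intro v hv
    cases hv with
    | base _ h => omega
    | step e he hM h => exact (hd_cpy n o e he (fun h => h0 (h ▸ hM))).1
  have hcl : ∀ v w e, Desc n o M v → v ∈ lamVtx m n → w ∈ lamVtx m n → e ∈ M → joins e v w →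
      Desc n o M w := by
    intro v w e hv hvl hwl he hj
    by_cases hw : o + n + 1 ≤ w.1
    · exact Desc.base w hw
    have hec := mem_cpy_of_joins n m o e v w hj hvl hwl (hD v hv) (by omega)
    rcases joins_tl_hd o e v w hj with ⟨rfl, rfl⟩ | ⟨h1, rfl⟩
    · exact Desc.step e hec he hv
    · cases hv with
      | base _ h =>
        have := (hd_cpy n o e hec (fun h => h0 (h ▸ he))).2
        rw [h1] at h
        omega
      | step e2 he2 hM2 h =>
        have := hp _ he2 _ hec hM2 he h1
        rwa [← this]
  rintro ⟨l, ⟨a, ha, ha1⟩, ⟨z, hz, hz1⟩, hl, hc⟩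
  have main : ∀ l : List Vtx, (∀ v ∈ l, v ∈ lamVtx m n) →
      (∀ p ∈ cp l, ∃ e ∈ M, joins e p.1 p.2) → (∀ z, l.getLast? = some z → Desc n o M z) →
      ∀ a, l.head? = some a → Desc n o M a := by
    intro l
    induction l with
    | nil => intro _ _ _ a h; simp at h
    | cons x t ih =>
      intro h1 h2 h3 a h
      simp only [List.head?_cons, Option.some.injEq] at h
      subst h
      cases t with
      | nil => exact h3 _ (by simp)
      | cons b t =>
        have hb : Desc n o M b := by
          refine ih (fun v hv => h1 v (List.mem_cons_of_mem _ hv)) (fun p hp => h2 p ?_)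
            (fun z hz => h3 z ?_) b rfl
          · simp only [cp, List.tail_cons, List.zip_cons_cons] at hp ⊢
            exact List.mem_cons_of_mem _ hp
          · rw [List.getLast?_cons_cons]; exact hz
        obtain ⟨e, he, hj⟩ := h2 (x, b) (by simp [cp])
        refine hcl b x e hb (h1 _ (by simp)) (h1 _ (by simp)) he ?_
        unfold joins at hj ⊢
        tauto
  have := hD a (main l hl hc (fun z' hz' => by
    rw [hz] at hz'
    cases hz'
    exact Desc.base z (by omega)) a ha)
  omega

/-! ### States of copies -/

/-- Breaker's pairing condition. -/
def Guard (n : ℕ) (o : ℤ) (M B : Finset Edge) : Prop :=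
  e0 o ∈ B ∧ ∀ a ∈ cpy n o, ∀ b ∈ cpy n o, a ≠ b → hd o a = hd o b → a ∈ M → b ∈ B

/-- Breaker is one move ahead. -/
def Ahead (n : ℕ) (o : ℤ) (k : ℕ) (M B : Finset Edge) : Prop :=
  Guard n o M B ∧ (cpy n o \ (M ∪ B)).card ≤ k

/-- Breaker, to move, is winning in the copy. -/
def Ready (n : ℕ) (o : ℤ) (k : ℕ) (M B : Finset Edge) : Prop :=
  (∃ f ∈ cpy n o, f ∉ M ∧ Guard n o M (insert f B)) ∧ (cpy n o \ (M ∪ B)).card ≤ k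

lemma Guard.mono {n : ℕ} {o : ℤ} {M B B' : Finset Edge} (h : Guard n o M B) (hB : B ⊆ B') :
    Guard n o M B' :=
  ⟨hB h.1, fun a ha b hb hab hh hM => hB (h.2 a ha b hb hab hh hM)⟩

lemma free_mono {C M M' B B' : Finset Edge} {k : ℕ} (h : (C \ (M ∪ B)).card ≤ k) (hM : M ⊆ M')
    (hB : B ⊆ B') : (C \ (M' ∪ B')).card ≤ k :=
  (Finset.card_le_card (Finset.sdiff_subset_sdiff subset_rfl
    (Finset.union_subset_union hM hB))).trans h

lemma Ahead.mono {n : ℕ} {o : ℤ} {k : ℕ} {M B B' : Finset Edge} (h : Ahead n o k M B)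
    (hB : B ⊆ B') : Ahead n o k M B' :=
  ⟨h.1.mono hB, free_mono h.2 subset_rfl hB⟩

lemma Ready.mono {n : ℕ} {o : ℤ} {k : ℕ} {M B B' : Finset Edge} (h : Ready n o k M B)
    (hB : B ⊆ B') : Ready n o k M B' := by
  obtain ⟨⟨f, hf, hfM, hg⟩, h2⟩ := h
  exact ⟨⟨f, hf, hfM, hg.mono (Finset.insert_subset_insert f hB)⟩, free_mono h2 subset_rfl hB⟩

lemma Ahead.ready {n : ℕ} (hn : 1 ≤ n) {o : ℤ} {k : ℕ} {M B : Finset Edge} (h : Ahead n o k M B)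
    (hd : Disjoint M B) : Ready n o k M B :=
  ⟨⟨e0 o, e0_mem n hn o, fun h' => Finset.disjoint_left.1 hd h' h.1.1,
    h.1.mono (Finset.subset_insert _ _)⟩, h.2⟩

lemma Guard.other {n : ℕ} {o : ℤ} {M B : Finset Edge} {e : Edge} (h : Guard n o M B)
    (he : e ∉ cpy n o) : Guard n o (insert e M) B := by
  refine ⟨h.1, fun a ha b hb hab hh hM => h.2 a ha b hb hab hh ?_⟩
  rcases Finset.mem_insert.1 hM with rfl | h'
  · exact absurd ha he
  · exact h'

lemma Ahead.other {n : ℕ} {o : ℤ} {k : ℕ} {M B : Finset Edge} {e : Edge} (h : Ahead n o k M B)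
    (he : e ∉ cpy n o) : Ahead n o k (insert e M) B :=
  ⟨h.1.other he, free_mono h.2 (Finset.subset_insert _ _) subset_rfl⟩

lemma Ready.other {n : ℕ} {o : ℤ} {k : ℕ} {M B : Finset Edge} {e : Edge} (h : Ready n o k M B)
    (he : e ∉ cpy n o) : Ready n o k (insert e M) B := by
  obtain ⟨⟨f, hf, hfM, hg⟩, h2⟩ := h
  refine ⟨⟨f, hf, ?_, hg.other he⟩, free_mono h2 (Finset.subset_insert _ _) subset_rfl⟩
  rw [Finset.mem_insert]
  rintro (rfl | h')
  · exact he hf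
  · exact hfM h'

lemma Ahead.respond {n : ℕ} (hn : 1 ≤ n) {o : ℤ} {k : ℕ} {M B : Finset Edge} {e : Edge}
    (h : Ahead n o k M B) (hdis : Disjoint M B) (he : e ∈ cpy n o) (heB : e ∉ B) :
    Ready n o k (insert e M) B := by
  refine ⟨?_, free_mono h.2 (Finset.subset_insert _ _) subset_rfl⟩
  obtain ⟨h0, h1⟩ := h.1
  by_cases hex : ∃ f ∈ cpy n o, f ≠ e ∧ hd o f = hd o e
  · obtain ⟨f, hf, hfe, hh⟩ := hex
    refine ⟨f, hf, ?_, Finset.mem_insert_of_mem h0, ?_⟩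
    · rw [Finset.mem_insert]
      rintro (h' | h')
      · exact hfe h'
      · exact heB (h1 f hf e he hfe hh h')
    · intro a ha b hb hab hab2 haM
      rcases Finset.mem_insert.1 haM with rfl | haM
      · rcases hd_three o a b f hab2 hh.symm with h | h | h
        · exact absurd h hab
        · exact absurd h.symm hfe
        · rw [h]; exact Finset.mem_insert_self _ _
      · exact Finset.mem_insert_of_mem (h1 a ha b hb hab hab2 haM)
  · refine ⟨e0 o, e0_mem n hn o, ?_, Finset.mem_insert_self _ _, ?_⟩
    · rw [Finset.mem_insert]
      rintro (h' | h')
      · exact heB (h' ▸ h0)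
      · exact Finset.disjoint_left.1 hdis h' h0
    · intro a ha b hb hab hab2 haM
      rcases Finset.mem_insert.1 haM with rfl | haM
      · exact absurd ⟨b, hb, hab.symm, hab2.symm⟩ hex
      · exact Finset.mem_insert_of_mem (h1 a ha b hb hab hab2 haM)

lemma Ready.not_crossing {n m : ℕ} (hn : 1 ≤ n) {o : ℤ} (ho : 0 ≤ o) (hm : o + n + 1 ≤ m) {k : ℕ}
    {M B : Finset Edge} (h : Ready n o k M B) (hdis : Disjoint M B) :
    ¬ HasCrossing m n (↑M : Set Edge) := by
  obtain ⟨⟨f, hf, hfM, h0, h1⟩, -⟩ := h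
  have key : ∀ x, x ∈ insert f B → x ∉ M := by
    intro x hx hxM
    rcases Finset.mem_insert.1 hx with rfl | hx
    · exact hfM hxM
    · exact Finset.disjoint_left.1 hdis hxM hx
  refine no_crossing n m hn o ho hm _ (by exact_mod_cast key _ h0) ?_
  intro a ha b hb haM hbM hh
  by_contra hab
  exact key b (h1 a ha b hb hab hh (by exact_mod_cast haM)) (by exact_mod_cast hbM)

/-- A copy which is completely filled and in which Breaker has won. -/
def Fin0 (n : ℕ) (o : ℤ) (M B : Finset Edge) : Prop := Ahead n o 0 M B

lemma Fin0.insert_maker {n : ℕ} {o : ℤ} {M B : Finset Edge} {e : Edge}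
    (h : Fin0 n o M B) (heM : e ∉ M) (heB : e ∉ B) : Fin0 n o (insert e M) B := by
  refine Ahead.other h fun he => ?_
  have := h.2
  rw [Nat.le_zero, Finset.card_eq_zero, Finset.sdiff_eq_empty_iff_subset] at this
  rcases Finset.mem_union.1 (this he) with h | h
  · exact heM h
  · exact heB h

lemma Ready.move {n : ℕ} {o : ℤ} {k : ℕ} {M B : Finset Edge} (h : Ready n o (k+1) M B) :
    Fin0 n o M B ∨ ∃ e ∈ cpy n o, e ∉ M ∧ e ∉ B ∧ Ahead n o k M (insert e B) := by
  obtain ⟨⟨f, hf, hfM, hg⟩, h2⟩ := h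
  have hcard : ∀ e ∈ cpy n o, e ∉ M → e ∉ B → (cpy n o \ (M ∪ insert e B)).card ≤ k := by
    intro e he heM heB
    have : (cpy n o \ (M ∪ insert e B)) = (cpy n o \ (M ∪ B)).erase e := by
      ext x; simp only [Finset.mem_sdiff, Finset.mem_union, Finset.mem_insert, Finset.mem_erase]
      tauto
    rw [this, Finset.card_erase_of_mem (by simp [he, heM, heB])]
    omega
  by_cases hfB : f ∈ B
  · rw [Finset.insert_eq_of_mem hfB] at hg
    rcases Finset.eq_empty_or_nonempty (cpy n o \ (M ∪ B)) with h | ⟨e, he⟩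
    · left; exact ⟨hg, by simp [h]⟩
    · right
      simp only [Finset.mem_sdiff, Finset.mem_union, not_or] at he
      exact ⟨e, he.1, he.2.1, he.2.2, hg.mono (Finset.subset_insert _ _),
        hcard e he.1 he.2.1 he.2.2⟩
  · right
    exact ⟨f, hf, hfM, hfB, hg, hcard f hf hfM hfB⟩

lemma Ready.zero {n : ℕ} {o : ℤ} {M B : Finset Edge} (h : Ready n o 0 M B) : Fin0 n o M B := by
  rcases (Ready.move (k := 0) ⟨h.1, h.2.trans (by omega)⟩) with h' | ⟨e, he, heM, heB, -⟩
  · exact h'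
  · have := h.2
    rw [Nat.le_zero, Finset.card_eq_zero, Finset.sdiff_eq_empty_iff_subset] at this
    rcases Finset.mem_union.1 (this he) with h | h
    · exact absurd h heM
    · exact absurd h heB

/-- Offset of the `i`-th copy. -/
def off (n : ℕ) (i : ℕ) : ℤ := (((n + 1) * i : ℕ) : ℤ)

lemma cpy_disj {n i j : ℕ} {e : Edge} (hi : e ∈ cpy n (off n i)) (hj : e ∈ cpy n (off n j)) :
    i = j := by
  obtain ⟨⟨x, y⟩, b⟩ := e
  rw [mem_cpy] at hi hj
  have key : ∀ i j : ℕ, i < j → off n i + (n + 1) ≤ off n j := by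
    intro i j hij
    have : (n+1) * (i+1) ≤ (n+1) * j := Nat.mul_le_mul_left _ hij
    unfold off
    rw [Nat.mul_add] at this
    omega
  rcases lt_trichotomy i j with h | h | h
  · have := key i j h; omega
  · exact h
  · have := key j i h; omega

/-- The global state during a phase. -/
def St (n N k u w : ℕ) (M B : Finset Edge) : Prop :=
  ∃ U X Y : Finset ℕ, (∀ i ∈ U, i < N ∧ Ready n (off n i) (k+1) M B) ∧
    (∀ i ∈ X, i < N ∧ Ahead n (off n i) k M B) ∧ (∀ i ∈ Y, i < N ∧ Ready n (off n i) k M B) ∧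
    Disjoint U X ∧ Disjoint U Y ∧ Disjoint X Y ∧ u ≤ U.card ∧ w ≤ 2 * X.card + Y.card

lemma St.mono {n N k u w : ℕ} {M B B' : Finset Edge} (h : St n N k u w M B) (hB : B ⊆ B') :
    St n N k u w M B' := by
  obtain ⟨U, X, Y, hU, hX, hY, r⟩ := h
  exact ⟨U, X, Y, fun i hi => ⟨(hU i hi).1, (hU i hi).2.mono hB⟩,
    fun i hi => ⟨(hX i hi).1, (hX i hi).2.mono hB⟩,
    fun i hi => ⟨(hY i hi).1, (hY i hi).2.mono hB⟩, r⟩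

lemma St.weaken {n N k u w u' w' : ℕ} {M B : Finset Edge} (h : St n N k u w M B) (hu : u' ≤ u)
    (hw : w' ≤ w) : St n N k u' w' M B := by
  obtain ⟨U, X, Y, hU, hX, hY, a, b, c, d, e⟩ := h
  exact ⟨U, X, Y, hU, hX, hY, a, b, c, hu.trans d, hw.trans e⟩

lemma St.maker_one {n N k u w : ℕ} (hn : 1 ≤ n) {M B : Finset Edge} {e : Edge}
    (h : St n N k u w M B) (hdis : Disjoint M B) (heB : e ∉ B) :
    St n N k (u-1) (w-1) (insert e M) B := by
  obtain ⟨U, X, Y, hU, hX, hY, d1, d2, d3, cu, cw⟩ := h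
  by_cases hex : ∃ i, e ∈ cpy n (off n i)
  swap
  · push Not at hex
    exact ⟨U, X, Y, fun i hi => ⟨(hU i hi).1, (hU i hi).2.other (hex i)⟩,
      fun i hi => ⟨(hX i hi).1, (hX i hi).2.other (hex i)⟩,
      fun i hi => ⟨(hY i hi).1, (hY i hi).2.other (hex i)⟩, d1, d2, d3, by omega, by omega⟩
  obtain ⟨i0, hi0⟩ := hex
  have hne : ∀ i, i ≠ i0 → e ∉ cpy n (off n i) := fun i hi h => hi (cpy_disj h hi0)
  by_cases hx : i0 ∈ X
  · have hiY : i0 ∉ Y := Finset.disjoint_left.1 d3 hx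
    have hiU : i0 ∉ U := Finset.disjoint_right.1 d1 hx
    refine ⟨U, X.erase i0, insert i0 Y, ?_, ?_, ?_, ?_, ?_, ?_, ?_, ?_⟩
    · intro i hi
      exact ⟨(hU i hi).1, (hU i hi).2.other (hne i (fun h => hiU (h ▸ hi)))⟩
    · intro i hi
      rw [Finset.mem_erase] at hi
      exact ⟨(hX i hi.2).1, (hX i hi.2).2.other (hne i hi.1)⟩
    · intro i hi
      rcases Finset.mem_insert.1 hi with rfl | hi
      · exact ⟨(hX i hx).1, (hX i hx).2.respond hn hdis hi0 heB⟩
      · exact ⟨(hY i hi).1, (hY i hi).2.other (hne i (fun h => hiY (h ▸ hi)))⟩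
    · exact d1.mono_right (Finset.erase_subset _ _)
    · exact Finset.disjoint_insert_right.2 ⟨hiU, d2⟩
    · exact Finset.disjoint_insert_right.2 ⟨Finset.notMem_erase _ _,
        d3.mono_left (Finset.erase_subset _ _)⟩
    · omega
    · rw [Finset.card_insert_of_notMem hiY, Finset.card_erase_of_mem hx]
      have : 0 < X.card := Finset.card_pos.2 ⟨_, hx⟩
      omega
  · refine ⟨U.erase i0, X, Y.erase i0, ?_, ?_, ?_, ?_, ?_, ?_, ?_, ?_⟩
    · intro i hi
      rw [Finset.mem_erase] at hi
      exact ⟨(hU i hi.2).1, (hU i hi.2).2.other (hne i hi.1)⟩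
    · intro i hi
      exact ⟨(hX i hi).1, (hX i hi).2.other (hne i (fun h => hx (h ▸ hi)))⟩
    · intro i hi
      rw [Finset.mem_erase] at hi
      exact ⟨(hY i hi.2).1, (hY i hi.2).2.other (hne i hi.1)⟩
    · exact d1.mono_left (Finset.erase_subset _ _)
    · exact d2.mono (Finset.erase_subset _ _) (Finset.erase_subset _ _)
    · exact d3.mono_right (Finset.erase_subset _ _)
    · have := Finset.pred_card_le_card_erase (s := U) (a := i0)
      omega
    · have := Finset.pred_card_le_card_erase (s := Y) (a := i0)
      omega

lemma St.maker {n N k u w : ℕ} (hn : 1 ≤ n) {M B : Finset Edge}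
    (h : St n N k u w M B) (hdis : Disjoint M B) (mv : Finset Edge) (hmv : Disjoint mv B) :
    St n N k (u - mv.card) (w - mv.card) (M ∪ mv) B := by
  induction mv using Finset.induction_on with
  | empty => simpa using h
  | insert e s hes ih =>
    rw [Finset.disjoint_insert_left] at hmv
    have := (ih hmv.2).maker_one hn (Finset.disjoint_union_left.2 ⟨hdis, hmv.2⟩) hmv.1
    rw [Finset.card_insert_of_notMem hes, Finset.union_insert]
    exact this.weaken (by omega) (by omega)

/-- Breaker has completed a copy. -/
def Done (n N : ℕ) (M B : Finset Edge) : Prop := ∃ i < N, Fin0 n (off n i) M B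

lemma Done.mono {n N : ℕ} {M B B' : Finset Edge} (h : Done n N M B) (hB : B ⊆ B') :
    Done n N M B' := by
  obtain ⟨i, hi, h⟩ := h
  exact ⟨i, hi, Ahead.mono h hB⟩

lemma Done.maker {n N : ℕ} {M B : Finset Edge} (h : Done n N M B) (mv : Finset Edge)
    (hmv : Disjoint mv (M ∪ B)) : Done n N (M ∪ mv) B := by
  induction mv using Finset.induction_on with
  | empty => simpa using h
  | insert e s hes ih =>
    rw [Finset.disjoint_insert_left, Finset.mem_union, not_or] at hmv
    obtain ⟨i, hi, h⟩ := ih hmv.2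
    rw [Finset.union_insert]
    refine ⟨i, hi, h.insert_maker ?_ hmv.1.2⟩
    rw [Finset.mem_union, not_or]
    exact ⟨hmv.1.1, hes⟩

lemma St.breaker_one {n N k u w : ℕ} {M B : Finset Edge}
    (h : St n N k u w M B) (hu : 1 ≤ u) :
    Done n N M B ∨ ∃ i < N, ∃ e ∈ cpy n (off n i), e ∉ M ∧ e ∉ B ∧
      St n N k (u-1) (w+2) M (insert e B) := by
  obtain ⟨U, X, Y, hU, hX, hY, d1, d2, d3, cu, cw⟩ := h
  obtain ⟨i, hi⟩ : U.Nonempty := Finset.card_pos.1 (by omega)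
  rcases (hU i hi).2.move with h | ⟨e, he, heM, heB, hA⟩
  · exact Or.inl ⟨i, (hU i hi).1, h⟩
  right
  have hsub := Finset.subset_insert e B
  have hiX : i ∉ X := Finset.disjoint_left.1 d1 hi
  have hiY : i ∉ Y := Finset.disjoint_left.1 d2 hi
  refine ⟨i, (hU i hi).1, e, he, heM, heB, U.erase i, insert i X, Y, ?_, ?_, ?_, ?_, ?_, ?_, ?_, ?_⟩
  · intro j hj
    have := hU j (Finset.mem_of_mem_erase hj)
    exact ⟨this.1, this.2.mono hsub⟩
  · intro j hj
    rcases Finset.mem_insert.1 hj with rfl | hj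
    · exact ⟨(hU j hi).1, hA⟩
    · exact ⟨(hX j hj).1, (hX j hj).2.mono hsub⟩
  · intro j hj
    exact ⟨(hY j hj).1, (hY j hj).2.mono hsub⟩
  · exact Finset.disjoint_insert_right.2 ⟨Finset.notMem_erase _ _,
      d1.mono_left (Finset.erase_subset _ _)⟩
  · exact d2.mono_left (Finset.erase_subset _ _)
  · exact Finset.disjoint_insert_left.2 ⟨hiY, d3⟩
  · rw [Finset.card_erase_of_mem hi]; omega
  · rw [Finset.card_insert_of_notMem hiX]; omega

lemma St.breaker {n N k : ℕ} {M : Finset Edge} (board : Set Edge)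
    (hb : ∀ i < N, ∀ e ∈ cpy n (off n i), e ∈ board) (r : ℕ) :
    ∀ {u w : ℕ} {B : Finset Edge}, St n N k u w M B → r ≤ u →
    ∃ mv : Finset Edge, (↑mv : Set Edge) ⊆ board \ ↑(M ∪ B) ∧ mv.card ≤ r ∧
      (Done n N M (B ∪ mv) ∨ St n N k (u - r) (w + 2 * r) M (B ∪ mv)) := by
  induction r with
  | zero =>
    intro u w B h _
    exact ⟨∅, by simp, by simp, Or.inr (by simpa using h)⟩
  | succ r ih =>
    intro u w B h hr
    rcases h.breaker_one (by omega) with hD | ⟨i, hi, e, he, heM, heB, hs⟩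
    · exact ⟨∅, by simp, by simp, Or.inl (by simpa using hD)⟩
    · obtain ⟨mv, h1, h2, h3⟩ := ih hs (by omega)
      refine ⟨insert e mv, ?_, (Finset.card_insert_le _ _).trans (by omega), ?_⟩
      · intro x hx
        rw [Finset.coe_insert, Set.mem_insert_iff] at hx
        rcases hx with rfl | hx
        · refine ⟨hb i hi _ he, ?_⟩
          simp [heM, heB]
        · have := h1 hx
          refine ⟨this.1, fun h' => this.2 ?_⟩
          simp only [Finset.coe_union, Finset.coe_insert, Set.mem_union, Set.mem_insert_iff] at h' ⊢
          tauto
      · have : B ∪ insert e mv = insert e B ∪ mv := by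
          ext x; simp only [Finset.mem_union, Finset.mem_insert]; tauto
        rw [this]
        rcases h3 with h3 | h3
        · exact Or.inl h3
        · exact Or.inr (h3.weaken (by omega) (by omega))

lemma St.next {n N k c w : ℕ} (hn : 1 ≤ n) {M B : Finset Edge} (hdis : Disjoint M B)
    (h : St n N (k+1) c (2 * w) M B) : St n N k w 0 M B := by
  obtain ⟨U, X, Y, hU, hX, hY, d1, d2, d3, cu, cw⟩ := h
  refine ⟨X ∪ Y, ∅, ∅, ?_, by simp, by simp, by simp, by simp, by simp, ?_, by simp⟩
  · intro i hi
    rcases Finset.mem_union.1 hi with hi | hi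
    · exact ⟨(hX i hi).1, (hX i hi).2.ready hn hdis⟩
    · exact hY i hi
  · rw [Finset.card_union_of_disjoint d3]; omega

lemma St.last {n N c w : ℕ} (hn : 1 ≤ n) {M B : Finset Edge} (hdis : Disjoint M B)
    (h : St n N 0 c w M B) (hw : 1 ≤ w) : Done n N M B := by
  obtain ⟨U, X, Y, hU, hX, hY, d1, d2, d3, cu, cw⟩ := h
  rcases Finset.eq_empty_or_nonempty X with rfl | ⟨i, hi⟩
  · obtain ⟨i, hi⟩ : Y.Nonempty := Finset.card_pos.1 (by simp at cw; omega)
    exact ⟨i, (hY i hi).1, (hY i hi).2.zero⟩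
  · exact ⟨i, (hX i hi).1, ((hX i hi).2.ready hn hdis).zero⟩

/-- The invariant. -/
def Inv (n N q : ℕ) (M B : Finset Edge) : Prop :=
  Disjoint M B ∧ (Done n N M B ∨ ∃ k s, s < 2 * (6 * q - 2) ^ k ∧
    St n N k ((6 * q - 2) ^ (k + 1) - (3 * q - 1) * s) s M B)

lemma arith (q k s : ℕ) (hq : 1 ≤ q) (hs : s < 2 * (6 * q - 2) ^ k) :
    q + (3 * q - 1) * s ≤ (6 * q - 2) ^ (k + 1) := by
  have h1 : 6 * q - 2 = 2 * (3 * q - 1) := by omega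
  have h2 : (6 * q - 2) ^ (k + 1) = (3 * q - 1) * (2 * (6 * q - 2) ^ k) := by
    rw [pow_succ]; nth_rw 2 [h1]; ring
  rw [h2]
  calc q + (3 * q - 1) * s ≤ (3 * q - 1) + (3 * q - 1) * s := by omega
    _ = (3 * q - 1) * (s + 1) := by ring
    _ ≤ _ := Nat.mul_le_mul_left _ hs

/-- **Theorem 2 (Day–Falgas-Ravry).** Let `n, q` be (positive) natural numbers. There is
a natural number `m₀ = m₀(n,q)` — one may take `m₀ = (n+1)·((6q−2)^T + 2q−1)` where
`T = n² + (n−1)²` — such that for all (positive) natural numbers `p` and `m` with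
`p ≤ 2q − 1` and `m ≥ m₀`, Breaker has a winning strategy for the `(p,q)`-crossing game
on `Λ_{m×n}`. -/
theorem breaker_wins_crossing_game_on_long_lambda
    (n q : ℕ) (hn : 1 ≤ n) (hq : 1 ≤ q) :
    ∃ m₀ : ℕ, m₀ = (n + 1) * ((6 * q - 2) ^ (n ^ 2 + (n - 1) ^ 2) + 2 * q - 1) ∧
      ∀ p m : ℕ, 1 ≤ p → p ≤ 2 * q - 1 → m₀ ≤ m →
        BreakerWins (lamEdges m n) (HasCrossing m n) p q := by
  classical
  refine ⟨_, rfl, fun p m hp1 hp hm => ?_⟩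
  set T := n ^ 2 + (n - 1) ^ 2 with hT
  set N := (6 * q - 2) ^ T + 2 * q - 1 with hN
  have hoff : ∀ i < N, 0 ≤ off n i ∧ off n i + n + 1 ≤ m := by
    intro i hi
    have h1 : (n+1) * (i+1) ≤ (n+1) * N := Nat.mul_le_mul_left _ hi
    rw [Nat.mul_add] at h1
    unfold off
    omega
  have hboard : ∀ i < N, ∀ e ∈ cpy n (off n i), e ∈ lamEdges m n := by
    intro i hi e he
    have := hoff i hi
    obtain ⟨⟨x, y⟩, b⟩ := e
    rw [mem_cpy] at he
    cases b <;> simp [lamEdges, lamVtx, ends] at * <;> omega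
  refine breakerWins_of_inv (lamEdges m n) ?_ (HasCrossing m n) ?_ p q (Inv n N q) ?_ ?_ ?_
  · refine Set.Finite.subset (((Set.finite_Icc (1:ℤ) m).prod (Set.finite_Icc (1:ℤ) n)).prod
      (Set.finite_univ (α := Bool))) ?_
    rintro ⟨⟨x, y⟩, b⟩ h
    have := h.1
    simp only [lamVtx, ends, Set.mem_setOf_eq] at this
    simp only [Set.mem_prod, Set.mem_Icc, Set.mem_univ, and_true]
    tauto
  · rintro S S' hS ⟨l, h1, h2, h3, h4⟩
    exact ⟨l, h1, h2, h3, fun p hp => (h4 p hp).imp fun e he => ⟨hS he.1, he.2⟩⟩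
  · intro mv hmv
    refine ⟨Finset.disjoint_empty_right _, Or.inr ⟨T - 1, 0, ?_, ?_⟩⟩
    · have : 0 < (6 * q - 2) ^ (T - 1) := pow_pos (by omega) _
      omega
    · have hT1 : T - 1 + 1 = T := by
        have : 0 < n ^ 2 := pow_pos hn 2
        omega
      have h0 : St n N (T - 1) N 0 ∅ ∅ := by
        refine ⟨Finset.range N, ∅, ∅, ?_, by simp, by simp, by simp, by simp, by simp, by simp,
          by simp⟩
        intro i hi
        refine ⟨Finset.mem_range.1 hi, ⟨e0 _, e0_mem n hn _, by simp, by simp, by simp⟩, ?_⟩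
        rw [hT1]
        simpa using card_cpy n hn (off n i)
      have h1 := h0.maker hn (Finset.disjoint_empty_right _) mv (Finset.disjoint_empty_right _)
      rw [Finset.empty_union] at h1
      refine h1.weaken ?_ (by omega)
      rw [hT1]
      omega
  · rintro M B ⟨hdis, hD | ⟨k, s, hs, U, X, Y, hU, hX, hY, d1, d2, d3, cu, cw⟩⟩
    · obtain ⟨i, hi, h⟩ := hD
      exact (Ahead.ready hn h hdis).not_crossing hn (hoff i hi).1 (hoff i hi).2 hdis
    · have := arith q k s hq hs
      obtain ⟨i, hi⟩ : U.Nonempty := Finset.card_pos.1 (by omega)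
      exact (hU i hi).2.not_crossing hn (hoff i (hU i hi).1).1 (hoff i (hU i hi).1).2 hdis
  · rintro M B ⟨hdis, hI⟩
    have hdisj : ∀ mv₂ : Finset Edge, (↑mv₂ : Set Edge) ⊆ lamEdges m n \ ↑(M ∪ B) →
        ∀ mv' : Finset Edge, (↑mv' : Set Edge) ⊆ lamEdges m n \ ↑(M ∪ (B ∪ mv₂)) →
        Disjoint M (B ∪ mv₂) ∧ Disjoint mv' (M ∪ (B ∪ mv₂)) := by
      intro mv₂ h2 mv' h'
      constructor
      · refine Finset.disjoint_union_right.2 ⟨hdis, Finset.disjoint_right.2 fun x hx hxM => ?_⟩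
        exact (h2 (by exact_mod_cast hx : x ∈ (↑mv₂ : Set Edge))).2 (by simp [hxM])
      · refine Finset.disjoint_left.2 fun x hx hx2 => ?_
        exact (h' (by exact_mod_cast hx : x ∈ (↑mv' : Set Edge))).2 (by exact_mod_cast hx2)
    have hdisj2 : ∀ mv₂ mv' : Finset Edge, Disjoint M (B ∪ mv₂) → Disjoint mv' (M ∪ (B ∪ mv₂)) →
        Disjoint (M ∪ mv') (B ∪ mv₂) := fun mv₂ mv' h1 h2 =>
      Finset.disjoint_union_left.2 ⟨h1, (Finset.disjoint_union_right.1 h2).2⟩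
    rcases hI with hD | ⟨k, s, hs, hSt⟩
    · refine ⟨∅, by simp, by simp, fun mv₂ _ h2 mv' h' hc => ?_⟩
      obtain ⟨g1, g2⟩ := hdisj mv₂ h2 mv' h'
      exact ⟨hdisj2 _ _ g1 g2, Or.inl ((hD.mono Finset.subset_union_left).maker mv' g2)⟩
    · have ha := arith q k s hq hs
      obtain ⟨mv, h1, hc, h3⟩ := hSt.breaker (lamEdges m n) hboard q (by omega)
      refine ⟨mv, h1, hc, fun mv₂ hsub h2 mv' h' hc' => ?_⟩
      obtain ⟨g1, g2⟩ := hdisj mv₂ h2 mv' h'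
      have g3 := hdisj2 _ _ g1 g2
      refine ⟨g3, ?_⟩
      have hBs : B ∪ mv ⊆ B ∪ mv₂ := Finset.union_subset_union subset_rfl hsub
      rcases h3 with hD | hS
      · exact Or.inl ((hD.mono hBs).maker mv' g2)
      · have hS2 := (hS.mono hBs).maker hn g1 mv' (Finset.disjoint_union_right.1 g2).2
        have hS3 : St n N k ((6 * q - 2) ^ (k + 1) - (3 * q - 1) * (s + 1)) (s + 1)
            (M ∪ mv') (B ∪ mv₂) := by
          refine hS2.weaken ?_ (by omega)
          rw [Nat.mul_add]
          omega
        by_cases hlt : s + 1 < 2 * (6 * q - 2) ^ k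
        · exact Or.inr ⟨k, s + 1, hlt, hS3⟩
        have heq : s + 1 = 2 * (6 * q - 2) ^ k := by omega
        cases k with
        | zero => exact Or.inl (hS3.last hn g3 (by omega))
        | succ k =>
          right
          refine ⟨k, 0, ?_, ?_⟩
          · have : 0 < (6 * q - 2) ^ k := pow_pos (by omega) _
            omega
          · refine (St.next (w := (6 * q - 2) ^ (k+1)) hn g3 (hS3.weaken le_rfl ?_)).weaken
              (by omega) le_rfl
            omega

end CrossingGames
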